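/- Let Y₁,…,Y_k be exchangeable [L]-valued random variables, δ ∈ ℝ^k with ∑_i δ_i = 0, and Z_r = ∑_i δ_i·1{Y_i = r}. Then ∑_{r<r'} E[Z_r² Z_{r'}²] ≤ 2·P(Y₁ ≠ Y₂)·‖δ‖₂⁴, and consequently E[(∑_{r=1}^L Z_r²)²] ≤ 16‖δ‖₂⁴. -/

import Mathlib

open MeasureTheory ProbabilityTheory

/-!
Expanding the squares turns `∑ r, ∑ r', c r r' * E[Z r ^ 2 * Z r' ^ 2]` into
`∑ i j m l, δ i * δ j * δ m * δ l * F i j m l`, where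
`F i j m l = E[1{Y i = Y j} * 1{Y m = Y l} * c (Y i) (Y m)]` (`sum_sum_mul_sq_mul_sq`).
By exchangeability `F i j m l` depends only on which of the indices `i, j, m, l` coincide, so `F` is
a linear combination of the indicators of the set partitions of the four index positions. As
`∑ i, δ i = 0`, a partition with a singleton block contributes nothing: only the three pairings,
each contributing `(∑ i, δ i ^ 2) ^ 2`, and the one-block partition, contributing `∑ i, δ i ^ 4`,
remain (`sum_four_eq`).

Put `X = (∑ i, δ i ^ 2) ^ 2` and `S = ∑ i, δ i ^ 4`, so that `0 ≤ S ≤ X`.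
* For `c r r' = 1{r ≠ r'}`, with `p = P(Y₁ ≠ Y₂)`, `s = P(Y₁ ≠ Y₂ = Y₃)` and
  `q = P(Y₁ = Y₂ ≠ Y₃ = Y₄)`, the sum is `(p - 2 s + 3 q) X + (4 s - 6 q - p) S`, which is at most
  `4 p X` because `0 ≤ s, q ≤ p`. It counts every pair `r < r'` twice.
* For `c = 1`, with `a = P(Y₁ = Y₂)`, `s = P(Y₂ = Y₃)`, `t = P(Y₁ = Y₂ = Y₃)` and
  `q = P(Y₁ = Y₂, Y₃ = Y₄)`, the sum is
  `(1 + 2 a - 2 s - 4 t + 3 q) X + (4 s + 8 t - 6 a - 6 q) S`. It is affine in `S`, at most `6 X` for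
  `S = 0` and at most `7 X` for `S = X`, hence at most `16 X`.

When there are too few indices for one of these patterns, the corresponding probability is
replaced by `0`; in the second case this is the reason for keeping `s` and `a` apart.
-/

namespace PartitionFlattening

/-! ### Fourfold sums against weights of total mass zero -/

/-- Indicator of the equality of two indices, as a real number. -/
noncomputable def eqInd {ι : Type*} [DecidableEq ι] (i j : ι) : ℝ := if i = j then 1 else 0

/-- Summation over the last index `l` of an expression affine in the indicators `1{i = l}`,
`1{j = l}`, `1{m = l}`, against weights of total mass zero. -/
lemma sum_last {ι : Type*} [Fintype ι] [DecidableEq ι] (δ : ι → ℝ) (hδ : ∑ i, δ i = 0)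
    (A B C D : ℝ) (i j m : ι) :
    ∑ l, δ l * (A + B * eqInd i l + C * eqInd j l + D * eqInd m l)
      = B * δ i + C * δ j + D * δ m := by
  have h : ∀ (B : ℝ) (i : ι), ∑ l, δ l * (B * eqInd i l) = B * δ i := by
    intro B i
    simp [eqInd, mul_comm]
  simp only [mul_add, Finset.sum_add_distrib, h]
  rw [← Finset.sum_mul, hδ]
  ring

/-- A fourfold sum against weights of total mass zero, for a kernel `F` whose value depends only on
the coincidence pattern of its indices: `v0` if all are distinct, `v1` if exactly the first two or
exactly the last two coincide, `v2` for the other patterns with one coincident pair, `w1` and `w2`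
for two pairs, `t` for three equal indices and `u` for four. The coefficients on the right are those
of the pairings and of the one-block partition in the Möbius inversion of this table of values. -/
lemma sum_four_eq {ι : Type*} [Fintype ι] [DecidableEq ι] (δ : ι → ℝ) (hδ : ∑ i, δ i = 0)
    (F : ι → ι → ι → ι → ℝ) (v0 v1 v2 w1 w2 t u : ℝ)
    (h0 : ∀ i j m l, i ≠ j → i ≠ m → i ≠ l → j ≠ m → j ≠ l → m ≠ l → F i j m l = v0)
    (h1 : ∀ i m l, i ≠ m → i ≠ l → m ≠ l → F i i m l = v1 ∧ F m l i i = v1)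
    (h2 : ∀ i m l, i ≠ m → i ≠ l → m ≠ l →
      F i m i l = v2 ∧ F i m l i = v2 ∧ F m i i l = v2 ∧ F m i l i = v2)
    (h3 : ∀ i m, i ≠ m → F i i m m = w1 ∧ F i m i m = w2 ∧ F i m m i = w2)
    (h4 : ∀ i m, i ≠ m → F i i i m = t ∧ F i i m i = t ∧ F i m i i = t ∧ F m i i i = t)
    (h5 : ∀ i, F i i i i = u) :
    ∑ i, ∑ j, ∑ m, ∑ l, δ i * δ j * δ m * δ l * F i j m l
      = (w1 + 2 * w2 - 2 * v1 - 4 * v2 + 3 * v0) * (∑ i, δ i ^ 2) ^ 2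
        + (u + 4 * v1 + 8 * v2 - w1 - 2 * w2 - 4 * t - 6 * v0) * ∑ i, δ i ^ 4 := by
  -- Möbius coefficients of the partition types, finest first
  obtain ⟨c1, hc1⟩ : ∃ c, c = v1 - v0 := ⟨_, rfl⟩
  obtain ⟨c2, hc2⟩ : ∃ c, c = v2 - v0 := ⟨_, rfl⟩
  obtain ⟨d1, hd1⟩ : ∃ c, c = w1 - 2 * v1 + v0 := ⟨_, rfl⟩
  obtain ⟨d2, hd2⟩ : ∃ c, c = w2 - 2 * v2 + v0 := ⟨_, rfl⟩
  obtain ⟨b, hb⟩ : ∃ c, c = t - v1 - 2 * v2 + 2 * v0 := ⟨_, rfl⟩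
  obtain ⟨f, hf⟩ : ∃ c, c = u + 4 * v1 + 8 * v2 - w1 - 2 * w2 - 4 * t - 6 * v0 := ⟨_, rfl⟩
  have key : ∀ i j m l, F i j m l =
      (v0 + c1 * eqInd i j + c2 * eqInd i m + c2 * eqInd j m + b * (eqInd i j * eqInd i m))
      + (c2 + d2 * eqInd j m + b * eqInd i m) * eqInd i l
      + (c2 + d2 * eqInd i m + b * eqInd i j + b * eqInd j m) * eqInd j l
      + (c1 + d1 * eqInd i j + f * (eqInd i j * eqInd i m)) * eqInd m l := by
    intro i j m l
    subst hc1 hc2 hd1 hd2 hb hf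
    rcases eq_or_ne i j with rfl | hij
    · rcases eq_or_ne i m with rfl | him
      · rcases eq_or_ne i l with rfl | hil
        · rw [h5]; simp [eqInd]; ring
        · rw [(h4 i l hil).1]; simp [eqInd, *]; ring
      · rcases eq_or_ne i l with rfl | hil
        · rw [(h4 i m him).2.1]; simp [eqInd, him, him.symm]; ring
        · rcases eq_or_ne m l with rfl | hml
          · rw [(h3 i m him).1]; simp [eqInd, *]; ring
          · rw [(h1 i m l him hil hml).1]; simp [eqInd, *]
    · rcases eq_or_ne i m with rfl | him
      · rcases eq_or_ne i l with rfl | hil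
        · rw [(h4 i j hij).2.2.1]; simp [eqInd, hij, hij.symm]; ring
        · rcases eq_or_ne j l with rfl | hjl
          · rw [(h3 i j hij).2.1]; simp [eqInd, hij, hij.symm]; ring
          · rw [(h2 i j l hij hil hjl).1]; simp [eqInd, hij, hij.symm, hil, hjl]
      · rcases eq_or_ne j m with rfl | hjm
        · rcases eq_or_ne i l with rfl | hil
          · rw [(h3 i j hij).2.2]; simp [eqInd, hij, hij.symm]; ring
          · rcases eq_or_ne j l with rfl | hjl
            · rw [(h4 j i hij.symm).2.2.2]; simp [eqInd, *]; ring
            · rw [(h2 j i l hij.symm hjl hil).2.2.1]; simp [eqInd, *]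
        · rcases eq_or_ne i l with rfl | hil
          · rw [(h2 i j m hij him hjm).2.1]; simp [eqInd, hij, him, hjm, hij.symm, him.symm]
          · rcases eq_or_ne j l with rfl | hjl
            · rw [(h2 j i m hij.symm hjm him).2.2.2]; simp [eqInd, hij, him, hjm, hjm.symm]
            · rcases eq_or_ne m l with rfl | hml
              · rw [(h1 m i j him.symm hjm.symm hij).2]; simp [eqInd, *]
              · rw [h0 i j m l hij him hil hjm hjl hml]; simp [eqInd, *]
  have s4 : ∀ i j m, ∑ l, δ i * δ j * δ m * δ l * F i j m l = δ i * δ j * δ m *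
      ((c2 + d2 * eqInd j m + b * eqInd i m) * δ i
      + (c2 + d2 * eqInd i m + b * eqInd i j + b * eqInd j m) * δ j
      + (c1 + d1 * eqInd i j + f * (eqInd i j * eqInd i m)) * δ m) := by
    intro i j m
    rw [← sum_last δ hδ
      (v0 + c1 * eqInd i j + c2 * eqInd i m + c2 * eqInd j m + b * (eqInd i j * eqInd i m)),
      Finset.mul_sum]
    refine Finset.sum_congr rfl fun l _ => ?_
    rw [key]; ring
  have sq_sum : ∀ c : ℝ, ∑ m, δ m * (c * δ m) = c * ∑ m, δ m ^ 2 := by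
    intro c
    rw [Finset.mul_sum]
    exact Finset.sum_congr rfl fun m _ => by ring
  have s3 : ∀ i j, ∑ m, ∑ l, δ i * δ j * δ m * δ l * F i j m l = δ i * δ j *
      ((b * δ i + d2 * δ j + f * eqInd i j * δ i) * δ i + (d2 * δ i + b * δ j) * δ j
        + (c1 + d1 * eqInd i j) * ∑ m, δ m ^ 2) := by
    intro i j
    have hi : ∀ m, eqInd i m * δ m = eqInd i m * δ i := by
      intro m
      unfold eqInd
      split_ifs with h
      · rw [h]
      · simp
    have e := sum_last δ hδ (c2 * δ i + c2 * δ j + b * eqInd i j * δ j)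
      (b * δ i + d2 * δ j + f * eqInd i j * δ i) (d2 * δ i + b * δ j) 0 i j j
    rw [← sq_sum]
    have e' : (b * δ i + d2 * δ j + f * eqInd i j * δ i) * δ i + (d2 * δ i + b * δ j) * δ j
        = (b * δ i + d2 * δ j + f * eqInd i j * δ i) * δ i + (d2 * δ i + b * δ j) * δ j
          + 0 * δ j := by ring
    rw [e', ← e, ← Finset.sum_add_distrib, Finset.mul_sum]
    refine Finset.sum_congr rfl fun m _ => ?_
    rw [s4]
    linear_combination (δ i * δ j * δ m * f * eqInd i j) * hi m
  have s2 : ∀ i, ∑ j, ∑ m, ∑ l, δ i * δ j * δ m * δ l * F i j m l = δ i *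
      ((d1 + 2 * d2) * (∑ m, δ m ^ 2) * δ i + f * δ i ^ 3 + b * ∑ j, δ j ^ 3) := by
    intro i
    have e := sum_last δ hδ (c1 * ∑ m, δ m ^ 2 + b * δ i ^ 2)
      (f * δ i ^ 2 + d1 * ∑ m, δ m ^ 2) 0 0 i i i
    have e2 := sq_sum (2 * d2 * δ i)
    have e3 : ∑ j, δ j * (b * δ j ^ 2) = b * ∑ j, δ j ^ 3 := by
      rw [Finset.mul_sum]
      exact Finset.sum_congr rfl fun m _ => by ring
    have e' : (d1 + 2 * d2) * (∑ m, δ m ^ 2) * δ i + f * δ i ^ 3 + b * ∑ j, δ j ^ 3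
        = ((f * δ i ^ 2 + d1 * ∑ m, δ m ^ 2) * δ i + 0 * δ i + 0 * δ i)
          + 2 * d2 * δ i * (∑ m, δ m ^ 2) + b * ∑ j, δ j ^ 3 := by ring
    simp only [s3]
    rw [e', ← e, ← e2, ← e3, ← Finset.sum_add_distrib, ← Finset.sum_add_distrib, Finset.mul_sum]
    refine Finset.sum_congr rfl fun j _ => ?_
    generalize ∑ m, δ m ^ 2 = S
    ring
  have e1 : ∑ i, δ i * (b * ∑ j, δ j ^ 3) = 0 := by rw [← Finset.sum_mul, hδ, zero_mul]
  have e3 : ∑ i, δ i * (f * δ i ^ 3) = f * ∑ i, δ i ^ 4 := by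
    rw [Finset.mul_sum]
    exact Finset.sum_congr rfl fun m _ => by ring
  simp only [s2, mul_add, Finset.sum_add_distrib]
  rw [e1, e3, sq_sum, hd1, hd2, hf]
  ring

/-! ### Expansion of the squares -/

/-- Expansion of `∑ r, f r * z r ^ 2`, where `z r` is the weight of the fibre of `y` over `r`. -/
lemma sum_mul_sq {ι κ : Type*} [Fintype ι] [Fintype κ] [DecidableEq κ] (δ : ι → ℝ) (y : ι → κ)
    (f : κ → ℝ) :
    ∑ r, f r * (∑ i, δ i * (if y i = r then (1 : ℝ) else 0)) ^ 2
      = ∑ i, ∑ j, δ i * δ j * (eqInd (y i) (y j) * f (y i)) := by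
  simp only [sq, Finset.sum_mul_sum]
  simp only [Finset.mul_sum]
  rw [Finset.sum_comm]
  refine Finset.sum_congr rfl fun i _ => ?_
  rw [Finset.sum_comm]
  refine Finset.sum_congr rfl fun j _ => ?_
  rw [Finset.sum_eq_single (y i)]
  · simp only [eqInd, eq_comm (a := y j)]
    simp only [if_true]; ring
  · intro r _ hr
    simp [hr.symm]
  · simp

/-- The fourfold expansion, obtained by applying `sum_mul_sq` to the inner and the outer sum. -/
lemma sum_sum_mul_sq_mul_sq {ι κ : Type*} [Fintype ι] [Fintype κ] [DecidableEq κ] (δ : ι → ℝ)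
    (y : ι → κ) (c : κ → κ → ℝ) (z : κ → ℝ)
    (hz : ∀ r, z r = ∑ i, δ i * (if y i = r then (1 : ℝ) else 0)) :
    ∑ r, ∑ r', c r r' * (z r ^ 2 * z r' ^ 2)
      = ∑ i, ∑ j, ∑ m, ∑ l, δ i * δ j * δ m * δ l *
          (eqInd (y i) (y j) * eqInd (y m) (y l) * c (y i) (y m)) := by
  have h1 : ∀ r, ∑ r', c r r' * (z r ^ 2 * z r' ^ 2) = (∑ r', c r r' * z r' ^ 2) * z r ^ 2 := by
    intro r
    rw [Finset.sum_mul]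
    exact Finset.sum_congr rfl fun _ _ => by ring
  simp only [h1]
  simp only [hz]
  rw [sum_mul_sq]
  refine Finset.sum_congr rfl fun i _ => Finset.sum_congr rfl fun j _ => ?_
  rw [sum_mul_sq]
  simp only [Finset.mul_sum]
  exact Finset.sum_congr rfl fun m _ => Finset.sum_congr rfl fun l _ => by ring

/-! ### Exchangeability -/

/-- A function of `n`-tuples of indices that is invariant under permutations of the index set is
constant on injective tuples. The constant is `0` if there are no injective tuples, whence the
hypothesis `0 ≤ p`. -/
lemma exists_const {k n : ℕ} (Φ : (Fin n → Fin k) → ℝ) (p : ℝ) (hp : 0 ≤ p)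
    (hΦ : ∀ (σ : Equiv.Perm (Fin k)) f, Φ (fun x => σ (f x)) = Φ f)
    (hb : ∀ f, Function.Injective f → 0 ≤ Φ f ∧ Φ f ≤ p) :
    ∃ s, 0 ≤ s ∧ s ≤ p ∧ ∀ f, Function.Injective f → Φ f = s := by
  by_cases h : ∃ f : Fin n → Fin k, Function.Injective f
  · obtain ⟨f, hf⟩ := h
    refine ⟨Φ f, (hb f hf).1, (hb f hf).2, fun g hg => ?_⟩
    obtain ⟨σ, hσ⟩ := (Equiv.Perm.isMultiplyPretransitive (Fin k) n).exists_smul_eq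
      (⟨f, hf⟩ : Fin n ↪ Fin k) ⟨g, hg⟩
    rw [← hΦ σ f]
    congr 1
    funext x
    exact (DFunLike.congr_fun hσ x).symm
  · exact ⟨0, le_rfl, hp, fun f hf => (h ⟨f, hf⟩).elim⟩

lemma inj_two {α : Type*} {a b : α} (h : a ≠ b) : Function.Injective ![a, b] := by
  intro x y
  fin_cases x <;> fin_cases y <;> simp [h, h.symm]

lemma inj_three {α : Type*} {a b c : α} (hab : a ≠ b) (hac : a ≠ c) (hbc : b ≠ c) :
    Function.Injective ![a, b, c] := by
  intro x y
  fin_cases x <;> fin_cases y <;> simp [hab, hab.symm, hac, hac.symm, hbc, hbc.symm]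

lemma inj_four {α : Type*} {a b c d : α} (hab : a ≠ b) (hac : a ≠ c) (had : a ≠ d) (hbc : b ≠ c)
    (hbd : b ≠ d) (hcd : c ≠ d) : Function.Injective ![a, b, c, d] := by
  intro x y
  fin_cases x <;> fin_cases y <;>
    simp [hab, hab.symm, hac, hac.symm, hbc, hbc.symm, had, had.symm, hbd, hbd.symm, hcd, hcd.symm]

lemma eqInd_nonneg {ι : Type*} [DecidableEq ι] (i j : ι) : 0 ≤ eqInd i j := by
  unfold eqInd; split_ifs <;> norm_num

lemma eqInd_le_one {ι : Type*} [DecidableEq ι] (i j : ι) : eqInd i j ≤ 1 := by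
  unfold eqInd; split_ifs <;> norm_num

lemma eqInd_self {ι : Type*} [DecidableEq ι] (i : ι) : eqInd i i = 1 := by
  simp [eqInd]

lemma eqInd_comm {ι : Type*} [DecidableEq ι] (i j : ι) : eqInd i j = eqInd j i := by
  simp [eqInd, eq_comm]

lemma sum_off_diag {L : ℕ} (G : Fin L → Fin L → ℝ) (hG : ∀ r r', G r r' = G r' r) :
    ∑ r, ∑ r', (1 - eqInd r r') * G r r'
      = 2 * ∑ q ∈ Finset.univ.filter (fun q : Fin L × Fin L => q.1 < q.2), G q.1 q.2 := by
  have h : ∀ r r', (1 - eqInd r r') * G r r'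
      = (if r < r' then G r r' else 0) + (if r' < r then G r' r else 0) := by
    intro r r'
    rcases lt_trichotomy r r' with h | rfl | h
    · simp [eqInd, h, h.ne, h.not_gt]
    · simp [eqInd]
    · simp [eqInd, h, h.ne', h.not_gt, hG r r']
  simp only [h, Finset.sum_add_distrib]
  rw [Finset.sum_comm (f := fun r r' => if r' < r then G r' r else 0), ← two_mul,
    Finset.sum_filter, Fintype.sum_prod_type]

/-- `Y` takes finitely many values, so all its statistics are integrable. -/
lemma integrable_comp {Ω : Type*} [MeasurableSpace Ω] (μ : Measure Ω) [IsProbabilityMeasure μ]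
    {k L : ℕ} (Y : Fin k → Ω → Fin L) (hmeas : ∀ i, Measurable (Y i))
    (f : (Fin k → Fin L) → ℝ) : Integrable (fun ω => f (fun i => Y i ω)) μ := by
  have hY : Measurable (fun ω (i : Fin k) => Y i ω) := measurable_pi_lambda _ hmeas
  have : IsFiniteMeasure (μ.map (fun ω (i : Fin k) => Y i ω)) := inferInstance
  exact (Integrable.of_finite (f := f)).comp_measurable hY

lemma integral_perm {Ω : Type*} [MeasurableSpace Ω] (μ : Measure Ω) {k L : ℕ}
    (Y : Fin k → Ω → Fin L)
    (hexch : ∀ σ : Equiv.Perm (Fin k),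
      IdentDistrib (fun ω (i : Fin k) => Y (σ i) ω) (fun ω (i : Fin k) => Y i ω) μ μ)
    (f : (Fin k → Fin L) → ℝ) (σ : Equiv.Perm (Fin k)) :
    ∫ ω, f (fun i => Y (σ i) ω) ∂μ = ∫ ω, f (fun i => Y i ω) ∂μ :=
  ((hexch σ).comp (Measurable.of_discrete (f := f))).integral_eq

/-- Exchangeability in terms of tuples of indices: the expectation of a statistic `g` of `n`
distinct variables does not depend on which variables are chosen. A bound `g ≤ h` by a statistic
with expectation `p` passes to the common value. -/
lemma exists_integral_const {Ω : Type*} [MeasurableSpace Ω] (μ : Measure Ω)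
    [IsProbabilityMeasure μ] {k L n : ℕ} (Y : Fin k → Ω → Fin L) (hmeas : ∀ i, Measurable (Y i))
    (hexch : ∀ σ : Equiv.Perm (Fin k),
      IdentDistrib (fun ω (i : Fin k) => Y (σ i) ω) (fun ω (i : Fin k) => Y i ω) μ μ)
    (g h : (Fin n → Fin L) → ℝ) (hg : ∀ y, 0 ≤ g y) (hgh : ∀ y, g y ≤ h y) (p : ℝ) (hp : 0 ≤ p)
    (hh : ∀ f : Fin n → Fin k, Function.Injective f → ∫ ω, h (fun x => Y (f x) ω) ∂μ = p) :
    ∃ s, 0 ≤ s ∧ s ≤ p ∧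
      ∀ f : Fin n → Fin k, Function.Injective f → ∫ ω, g (fun x => Y (f x) ω) ∂μ = s := by
  refine exists_const (fun f => ∫ ω, g (fun x => Y (f x) ω) ∂μ) p hp ?_ ?_
  · intro σ f
    exact integral_perm μ Y hexch (fun y => g (fun x => y (f x))) σ
  · intro f hf
    refine ⟨integral_nonneg fun ω => hg _, ?_⟩
    rw [← hh f hf]
    exact integral_mono (integrable_comp μ Y hmeas fun y => g (fun x => y (f x)))
      (integrable_comp μ Y hmeas fun y => h (fun x => y (f x))) fun ω => hgh _

/-! ### The moment for a general kernel -/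

/-- The expectation of `∑ r, ∑ r', c r r' * (Z r ^ 2 * Z r' ^ 2)` for a symmetric `[0, 1]`-valued
kernel `c` with constant value `κ` on the diagonal. Here `p = E[c (Y₁, Y₂)]`, `a = P(Y₁ = Y₂)`,
`t = P(Y₁ = Y₂ = Y₃)`, `s = E[c (Y₁, Y₂); Y₂ = Y₃]` and `q = E[c (Y₁, Y₃); Y₁ = Y₂, Y₃ = Y₄]`, with
`0` in place of those that would need more than `k` variables. -/
lemma integral_kernel_eq {Ω : Type*} [MeasurableSpace Ω] (μ : Measure Ω)
    [IsProbabilityMeasure μ] {k L : ℕ} (Y : Fin k → Ω → Fin L) (hmeas : ∀ i, Measurable (Y i))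
    (hexch : ∀ σ : Equiv.Perm (Fin k),
      IdentDistrib (fun ω (i : Fin k) => Y (σ i) ω) (fun ω (i : Fin k) => Y i ω) μ μ)
    (δ : Fin k → ℝ) (hδ : ∑ i, δ i = 0) (Z : Fin L → Ω → ℝ)
    (hZ : ∀ r ω, Z r ω = ∑ i, δ i * (if Y i ω = r then (1 : ℝ) else 0))
    (c : Fin L → Fin L → ℝ) (κ : ℝ) (hc0 : ∀ r r', 0 ≤ c r r') (hc1 : ∀ r r', c r r' ≤ 1)
    (hcs : ∀ r r', c r r' = c r' r) (hcd : ∀ r, c r r = κ) :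
    ∃ p a s t q : ℝ, (0 ≤ p ∧ p ≤ 1) ∧ (0 ≤ a ∧ a ≤ 1) ∧ (0 ≤ s ∧ s ≤ p) ∧ (0 ≤ t ∧ t ≤ a) ∧
      (0 ≤ q ∧ q ≤ p) ∧ (∀ i j, i ≠ j → ∫ ω, c (Y i ω) (Y j ω) ∂μ = p) ∧
      ∫ ω, ∑ r, ∑ r', c r r' * (Z r ω ^ 2 * Z r' ω ^ 2) ∂μ
        = (p + 2 * (κ * a) - 2 * s - 4 * (κ * t) + 3 * q) * (∑ i, δ i ^ 2) ^ 2
          + (κ + 4 * s + 8 * (κ * t) - p - 2 * (κ * a) - 4 * (κ * a) - 6 * q)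
            * ∑ i, δ i ^ 4 := by
  obtain ⟨p, hp0, hp1, hp⟩ := exists_integral_const (n := 2) μ Y hmeas hexch
    (fun y => c (y 0) (y 1)) (fun _ => 1) (fun _ => hc0 _ _) (fun _ => hc1 _ _) 1 zero_le_one
    (fun _ _ => by simp)
  obtain ⟨a, ha0, ha1, ha⟩ := exists_integral_const (n := 2) μ Y hmeas hexch
    (fun y => eqInd (y 0) (y 1)) (fun _ => 1) (fun _ => eqInd_nonneg _ _)
    (fun _ => eqInd_le_one _ _) 1 zero_le_one (fun _ _ => by simp)
  have hp' : ∀ i j, i ≠ j → ∫ ω, c (Y i ω) (Y j ω) ∂μ = p := fun i j h => hp _ (inj_two h)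
  have ha' : ∀ i j, i ≠ j → ∫ ω, eqInd (Y i ω) (Y j ω) ∂μ = a := fun i j h => ha _ (inj_two h)
  obtain ⟨s, hs0, hs1, hs⟩ := exists_integral_const (n := 3) μ Y hmeas hexch
    (fun y => eqInd (y 1) (y 2) * c (y 0) (y 1)) (fun y => c (y 0) (y 1))
    (fun _ => mul_nonneg (eqInd_nonneg _ _) (hc0 _ _))
    (fun _ => mul_le_of_le_one_left (hc0 _ _) (eqInd_le_one _ _)) p hp0
    (fun f hf => hp' _ _ (hf.ne (by decide)))
  obtain ⟨t, ht0, ht1, ht⟩ := exists_integral_const (n := 3) μ Y hmeas hexch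
    (fun y => eqInd (y 0) (y 1) * eqInd (y 0) (y 2)) (fun y => eqInd (y 0) (y 1))
    (fun _ => mul_nonneg (eqInd_nonneg _ _) (eqInd_nonneg _ _))
    (fun _ => mul_le_of_le_one_right (eqInd_nonneg _ _) (eqInd_le_one _ _)) a ha0
    (fun f hf => ha' _ _ (hf.ne (by decide)))
  obtain ⟨q, hq0, hq1, hq⟩ := exists_integral_const (n := 4) μ Y hmeas hexch
    (fun y => eqInd (y 0) (y 1) * eqInd (y 2) (y 3) * c (y 0) (y 2)) (fun y => c (y 0) (y 2))
    (fun _ => mul_nonneg (mul_nonneg (eqInd_nonneg _ _) (eqInd_nonneg _ _)) (hc0 _ _))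
    (fun _ => mul_le_of_le_one_left (hc0 _ _)
      (mul_le_one₀ (eqInd_le_one _ _) (eqInd_nonneg _ _) (eqInd_le_one _ _))) p hp0
    (fun f hf => hp' _ _ (hf.ne (by decide)))
  have hs' : ∀ i j m, i ≠ j → i ≠ m → j ≠ m →
      ∫ ω, eqInd (Y j ω) (Y m ω) * c (Y i ω) (Y j ω) ∂μ = s :=
    fun i j m h1 h2 h3 => hs _ (inj_three h1 h2 h3)
  have ht' : ∀ i j m, i ≠ j → i ≠ m → j ≠ m →
      ∫ ω, eqInd (Y i ω) (Y j ω) * eqInd (Y i ω) (Y m ω) ∂μ = t :=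
    fun i j m h1 h2 h3 => ht _ (inj_three h1 h2 h3)
  have hq' : ∀ i j m l, i ≠ j → i ≠ m → i ≠ l → j ≠ m → j ≠ l → m ≠ l →
      ∫ ω, eqInd (Y i ω) (Y j ω) * eqInd (Y m ω) (Y l ω) * c (Y i ω) (Y m ω) ∂μ = q :=
    fun i j m l h1 h2 h3 h4 h5 h6 => hq _ (inj_four h1 h2 h3 h4 h5 h6)
  -- on the event `Y i = Y j` the kernel equals its diagonal value
  have hd : ∀ x y, eqInd x y * c x y = κ * eqInd x y := by
    intro x y
    unfold eqInd
    split_ifs with h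
    · rw [h, hcd]; ring
    · simp
  refine ⟨p, a, s, t, q, ⟨hp0, hp1⟩, ⟨ha0, ha1⟩, ⟨hs0, hs1⟩, ⟨ht0, ht1⟩, ⟨hq0, hq1⟩, hp', ?_⟩
  have e4 := sum_four_eq δ hδ
    (fun i j m l => ∫ ω, eqInd (Y i ω) (Y j ω) * eqInd (Y m ω) (Y l ω) * c (Y i ω) (Y m ω) ∂μ)
    q s (κ * t) p (κ * a) (κ * a) κ hq' ?_ ?_ ?_ ?_ ?_
  · rw [← e4]
    have hint : ∀ i j m l, Integrable (fun ω => δ i * δ j * δ m * δ l *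
        (eqInd (Y i ω) (Y j ω) * eqInd (Y m ω) (Y l ω) * c (Y i ω) (Y m ω))) μ :=
      fun i j m l => integrable_comp μ Y hmeas fun y => δ i * δ j * δ m * δ l *
        (eqInd (y i) (y j) * eqInd (y m) (y l) * c (y i) (y m))
    simp only [fun ω => sum_sum_mul_sq_mul_sq δ (fun i => Y i ω) c (fun r => Z r ω)
      (fun r => hZ r ω)]
    rw [integral_finsetSum _ fun i _ => integrable_finsetSum _ fun j _ =>
      integrable_finsetSum _ fun m _ => integrable_finsetSum _ fun l _ => hint i j m l]
    refine Finset.sum_congr rfl fun i _ => ?_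
    rw [integral_finsetSum _ fun j _ =>
      integrable_finsetSum _ fun m _ => integrable_finsetSum _ fun l _ => hint i j m l]
    refine Finset.sum_congr rfl fun j _ => ?_
    rw [integral_finsetSum _ fun m _ => integrable_finsetSum _ fun l _ => hint i j m l]
    refine Finset.sum_congr rfl fun m _ => ?_
    rw [integral_finsetSum _ fun l _ => hint i j m l]
    exact Finset.sum_congr rfl fun l _ => integral_const_mul _ _
  · intro i m l him hil hml
    refine ⟨?_, ?_⟩
    · simp only [eqInd_self, one_mul]
      exact hs' i m l him hil hml
    · simp only [eqInd_self, mul_one]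
      rw [← hs' i m l him hil hml]
      exact integral_congr_ae (ae_of_all _ fun ω => by simp only [hcs (Y i ω)])
  · intro i m l him hil hml
    rw [← ht' i m l him hil hml, ← integral_const_mul]
    refine ⟨?_, ?_, ?_, ?_⟩ <;> refine integral_congr_ae (ae_of_all _ fun ω => ?_) <;>
      simp only [eqInd] <;> grind
  · intro i m him
    refine ⟨?_, ?_, ?_⟩
    · simp only [eqInd_self, one_mul]
      exact hp' i m him
    all_goals
      rw [← ha' i m him, ← integral_const_mul]
      refine integral_congr_ae (ae_of_all _ fun ω => ?_)
      simp only [eqInd]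
      grind
  · intro i m him
    rw [← ha' i m him, ← integral_const_mul]
    refine ⟨?_, ?_, ?_, ?_⟩ <;> refine integral_congr_ae (ae_of_all _ fun ω => ?_) <;>
      simp only [eqInd] <;> grind
  · intro i
    simp [eqInd_self, hcd]

end PartitionFlattening

open PartitionFlattening

theorem partition_flattening_cross_moment {Ω : Type*} [MeasurableSpace Ω]
    (μ : Measure Ω) [IsProbabilityMeasure μ]
    (k L : ℕ) (hk : 2 ≤ k)
    (Y : Fin k → Ω → Fin L) (hmeas : ∀ i, Measurable (Y i))
    (hexch : ∀ σ : Equiv.Perm (Fin k),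
      IdentDistrib (fun ω (i : Fin k) => Y (σ i) ω) (fun ω (i : Fin k) => Y i ω) μ μ)
    (δ : Fin k → ℝ) (hδ : ∑ i, δ i = 0)
    (Z : Fin L → Ω → ℝ)
    (hZ : ∀ r ω, Z r ω = ∑ i, δ i * (if Y i ω = r then (1 : ℝ) else 0)) :
    ∑ q ∈ Finset.univ.filter (fun q : Fin L × Fin L => q.1 < q.2),
        ∫ ω, Z q.1 ω ^ 2 * Z q.2 ω ^ 2 ∂μ ≤
      2 * (μ {ω | Y ⟨0, by omega⟩ ω ≠ Y ⟨1, by omega⟩ ω}).toReal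
        * (∑ i, δ i ^ 2) ^ 2 ∧
    ∫ ω, (∑ r : Fin L, Z r ω ^ 2) ^ 2 ∂μ ≤ 16 * (∑ i, δ i ^ 2) ^ 2 := by
  have hS0 : 0 ≤ ∑ i, δ i ^ 4 := Finset.sum_nonneg fun i _ => by positivity
  have hSX : ∑ i, δ i ^ 4 ≤ (∑ i, δ i ^ 2) ^ 2 := by
    have := Finset.sum_sq_le_sq_sum_of_nonneg (s := Finset.univ) (f := fun i => δ i ^ 2)
      (fun i _ => sq_nonneg _)
    calc ∑ i, δ i ^ 4 = ∑ i, (δ i ^ 2) ^ 2 := Finset.sum_congr rfl fun i _ => by ring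
      _ ≤ _ := this
  constructor
  · obtain ⟨p, a, s, t, q, hp, -, hs, -, hq, hpY, h⟩ :=
      integral_kernel_eq μ Y hmeas hexch δ hδ Z hZ
      (fun r r' => 1 - eqInd r r') 0 (fun r r' => sub_nonneg.2 (eqInd_le_one r r'))
      (fun r r' => sub_le_self _ (eqInd_nonneg r r')) (fun r r' => by rw [eqInd_comm])
      (fun r => by simp [eqInd_self])
    have hpμ : (μ {ω | Y ⟨0, by omega⟩ ω ≠ Y ⟨1, by omega⟩ ω}).toReal = p := by
      rw [← hpY ⟨0, by omega⟩ ⟨1, by omega⟩ (by simp)]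
      have hm : MeasurableSet {ω | Y ⟨0, by omega⟩ ω ≠ Y ⟨1, by omega⟩ ω} :=
        (measurableSet_eq_fun (hmeas _) (hmeas _)).compl
      rw [← measureReal_def, ← integral_indicator_one hm]
      refine integral_congr_ae (ae_of_all _ fun ω => ?_)
      by_cases hω : Y ⟨0, by omega⟩ ω = Y ⟨1, by omega⟩ ω <;> simp [eqInd, hω]
    have hint : ∀ r r', Integrable (fun ω => Z r ω ^ 2 * Z r' ω ^ 2) μ := by
      intro r r'
      simp only [hZ]
      exact integrable_comp μ Y hmeas fun y =>
        (∑ i, δ i * (if y i = r then (1 : ℝ) else 0)) ^ 2 *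
          (∑ i, δ i * (if y i = r' then (1 : ℝ) else 0)) ^ 2
    -- ordered pairs of distinct values count each unordered pair twice
    have hdouble : ∫ ω, ∑ r, ∑ r', (1 - eqInd r r') * (Z r ω ^ 2 * Z r' ω ^ 2) ∂μ
        = 2 * ∑ q ∈ Finset.univ.filter (fun q : Fin L × Fin L => q.1 < q.2),
            ∫ ω, Z q.1 ω ^ 2 * Z q.2 ω ^ 2 ∂μ := by
      rw [integral_finsetSum _ fun r _ =>
        integrable_finsetSum _ fun r' _ => (hint r r').const_mul _]
      simp only [fun r => integral_finsetSum (μ := μ) Finset.univ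
        (fun r' _ => (hint r r').const_mul (1 - eqInd r r')), integral_const_mul]
      have hsymm : ∀ r r', ∫ ω, Z r ω ^ 2 * Z r' ω ^ 2 ∂μ = ∫ ω, Z r' ω ^ 2 * Z r ω ^ 2 ∂μ :=
        fun r r' => by simp only [mul_comm]
      exact sum_off_diag (fun r r' => ∫ ω, Z r ω ^ 2 * Z r' ω ^ 2 ∂μ) hsymm
    rw [hpμ]
    -- the difference of the two sides, as a combination of `X - S` and `S`,
    -- where `X = (∑ i, δ i ^ 2) ^ 2` and `S = ∑ i, δ i ^ 4`
    have : 0 ≤ ((∑ i, δ i ^ 2) ^ 2 - ∑ i, δ i ^ 4) * (3 * p + 2 * s - 3 * q)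
        + (∑ i, δ i ^ 4) * (4 * p - 2 * s + 3 * q) :=
      add_nonneg (mul_nonneg (by linarith) (by linarith)) (mul_nonneg hS0 (by linarith))
    linarith
  · obtain ⟨p, a, s, t, q, hp, ha, hs, ht, hq, -, h⟩ :=
      integral_kernel_eq μ Y hmeas hexch δ hδ Z hZ
      (fun _ _ => 1) 1 (fun _ _ => zero_le_one) (fun _ _ => le_rfl) (fun _ _ => rfl) (fun _ => rfl)
    have hsq : ∀ ω, (∑ r : Fin L, Z r ω ^ 2) ^ 2
        = ∑ r, ∑ r', 1 * (Z r ω ^ 2 * Z r' ω ^ 2) := by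
      intro ω
      simp only [one_mul]
      rw [sq, Finset.sum_mul_sum]
    simp only [hsq]
    rw [h]
    -- the same combination of `X - S` and `S`, for the constant `16`
    have : 0 ≤ ((∑ i, δ i ^ 2) ^ 2 - ∑ i, δ i ^ 4) * (16 - (p + 2 * a - 2 * s - 4 * t + 3 * q))
        + (∑ i, δ i ^ 4) * (15 - 2 * s - 4 * t + 4 * a + 3 * q) :=
      add_nonneg (mul_nonneg (by linarith) (by linarith)) (mul_nonneg hS0 (by linarith))
    linarith
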